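/- arXiv:1903.01637 — 2 statements merged into one kernel-verified Lean document; each statement's English description precedes it below -/
import Mathlib

section
/- Let (Ω, 𝒜, μ) be a probability space, E and F standard Borel spaces, X : Ω → E and W : Ω → F measurable maps, and Y : Ω → ℝ an integrable random variable. Let κ_{Y|XW} denote the regular conditional distribution (condDistrib) of Y given (X, W), κ_{X|W} the regular conditional distribution of X given W, and κ_{Y|W} the regular conditional distribution of Y given W. Then for (μ ∘ W⁻¹)-almost every w ∈ F, ∫_E ( ∫_ℝ y dκ_{Y|XW}(x, w) ) dκ_{X|W}(w)(x) = ∫_ℝ y dκ_{Y|W}(w). -/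
open MeasureTheory ProbabilityTheory Filter

/-- Theorem 2 of Rambachan & Shephard at the level of regular conditional distributions:
averaging the conditional mean of the outcome `Y` given the history `X` and the treatment `W`
over the conditional distribution of the history given the treatment recovers the conditional
mean of `Y` given `W` alone (the disintegration/tower identity linking the causal response
function to the impulse response function). -/
theorem crf_average_eq_irf
    {Ω E F : Type*} [MeasurableSpace Ω]
    [MeasurableSpace E] [StandardBorelSpace E] [Nonempty E]
    [MeasurableSpace F] [StandardBorelSpace F] [Nonempty F]
    (μ : Measure Ω) [IsProbabilityMeasure μ]
    (X : Ω → E) (W : Ω → F) (Y : Ω → ℝ)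
    (hX : Measurable X) (hW : Measurable W) (hY : Measurable Y)
    (hY_int : Integrable Y μ) :
    ∀ᵐ w ∂(μ.map W),
      ∫ x, (∫ y, y ∂(condDistrib Y (fun ω => (X ω, W ω)) μ (x, w))) ∂(condDistrib X W μ w)
        = ∫ y, y ∂(condDistrib Y W μ w) := by
  have hXW : Measurable (fun ω => (X ω, W ω)) := hX.prodMk hW
  -- the inner conditional mean
  have hg : StronglyMeasurable
      (fun p : E × F => ∫ y, y ∂(condDistrib Y (fun ω => (X ω, W ω)) μ p)) :=
    StronglyMeasurable.integral_condDistrib (f := fun q : (E × F) × ℝ => q.2)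
      measurable_snd.stronglyMeasurable
  have hr : StronglyMeasurable (fun w : F => ∫ y, y ∂(condDistrib Y W μ w)) :=
    StronglyMeasurable.integral_condDistrib (f := fun q : F × ℝ => q.2)
      measurable_snd.stronglyMeasurable
  have hg' : StronglyMeasurable
      (fun q : F × E => ∫ y, y ∂(condDistrib Y (fun ω => (X ω, W ω)) μ (q.2, q.1))) :=
    hg.comp_measurable measurable_swap
  have hl : StronglyMeasurable (fun w : F =>
      ∫ x, (∫ y, y ∂(condDistrib Y (fun ω => (X ω, W ω)) μ (x, w))) ∂(condDistrib X W μ w)) :=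
    StronglyMeasurable.integral_condDistrib hg'
  rw [ae_map_iff hW.aemeasurable (measurableSet_eq_fun hl.measurable hr.measurable)]
  have h1 := condExp_ae_eq_integral_condDistrib' (μ := μ) hXW hY_int
  have h2 := condExp_ae_eq_integral_condDistrib' (μ := μ) hW hY_int
  have hgi : Integrable
      (fun ω => ∫ y, y ∂(condDistrib Y (fun ω => (X ω, W ω)) μ (X ω, W ω))) μ :=
    integrable_condExp.congr h1
  have h3 := condExp_prod_ae_eq_integral_condDistrib (μ := μ) hW hX.aemeasurable hg' hgi
  have hle : MeasurableSpace.comap W inferInstance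
      ≤ MeasurableSpace.comap (fun ω => (X ω, W ω)) inferInstance := by
    rintro s ⟨t, ht, rfl⟩
    exact ⟨Prod.snd ⁻¹' t, measurable_snd ht, rfl⟩
  have h4 := condExp_condExp_of_le (μ := μ) (f := Y) hle hXW.comap_le
  have h5 := condExp_congr_ae (m := MeasurableSpace.comap W inferInstance) h1
  filter_upwards [h2, h3, h4, h5] with ω e2 e3 e4 e5
  exact e3.symm.trans (e5.symm.trans (e4.trans e2))
end

section
/- Let k : ℝ → ℝ be nonnegative, bounded and Lebesgue-integrable, define k*(x) := ∫_ℝ k(u)·k(x + u) du, and assume k*(x) → 0 as |x| → ∞. Let φ : ℝ → ℝ be bounded and measurable, and fix w, w' ∈ ℝ with w ≠ w'. Then h^{−1} ∫_ℝ φ(x)·k((x − w)/h)·k((x − w')/h) dx → 0 as h → 0⁺. -/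
open MeasureTheory Filter

/-- The final claim of Theorem 6 in the appendix of Rambachan & Shephard: if the kernel
autocorrelation `k*(x) = ∫ k(u) k(x + u) du` vanishes as `|x| → ∞`, then for bounded measurable
`φ` and distinct evaluation points `w ≠ w'`, the scaled covariance term
`h⁻¹ ∫ φ(x) k((x − w)/h) k((x − w')/h) dx` tends to `0` as `h → 0⁺`. -/
theorem kernel_regression_covariance_vanishes
    (k : ℝ → ℝ) (hk_nonneg : ∀ u, 0 ≤ k u) (B : ℝ) (hk_bdd : ∀ u, k u ≤ B)
    (hk_int : Integrable k)
    (kstar : ℝ → ℝ) (hkstar : ∀ x, kstar x = ∫ u : ℝ, k u * k (x + u))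
    (hkstar_vanish : Tendsto kstar (cocompact ℝ) (nhds 0))
    (φ : ℝ → ℝ) (hφ_meas : Measurable φ) (Bφ : ℝ) (hφ_bdd : ∀ x, |φ x| ≤ Bφ)
    (w w' : ℝ) (hww' : w ≠ w') :
    Tendsto (fun h : ℝ => h⁻¹ * ∫ x : ℝ, φ x * k ((x - w) / h) * k ((x - w') / h))
      (nhdsWithin 0 (Set.Ioi 0)) (nhds 0) := by
  have hFint : ∀ c : ℝ, Integrable (fun u => k u * k (c + u)) := by
    intro c
    have h2 : Integrable (fun u => k (c + u)) := hk_int.comp_add_left c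
    refine hk_int.mul_bdd (c := B) h2.aestronglyMeasurable (Eventually.of_forall fun u => ?_)
    rw [Real.norm_eq_abs, abs_of_nonneg (hk_nonneg _)]
    exact hk_bdd _
  have hc : Tendsto (fun h : ℝ => (w - w') * h⁻¹) (nhdsWithin 0 (Set.Ioi 0)) (cocompact ℝ) := by
    rw [← Metric.cobounded_eq_cocompact, ← tendsto_norm_atTop_iff_cobounded]
    simp only [norm_mul]
    refine Tendsto.const_mul_atTop (norm_pos_iff.mpr (sub_ne_zero.mpr hww')) ?_
    exact tendsto_norm_atTop_atTop.comp tendsto_inv_nhdsGT_zero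
  have hlim : Tendsto (fun h : ℝ => Bφ * kstar ((w - w') * h⁻¹))
      (nhdsWithin 0 (Set.Ioi 0)) (nhds 0) := by
    simpa using (hkstar_vanish.comp hc).const_mul Bφ
  refine squeeze_zero_norm' ?_ hlim
  filter_upwards [self_mem_nhdsWithin] with h hh
  have hpos : 0 < h := hh
  have hG : ∀ x : ℝ, k ((x - w) / h) * k ((x - w') / h)
      = (fun u => k u * k ((w - w') * h⁻¹ + u)) ((x - w) / h) := by
    intro x
    have : (x - w') / h = (w - w') * h⁻¹ + (x - w) / h := by
      field_simp
      ring
    simp only [this]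
  have hGint : Integrable (fun x : ℝ => k ((x - w) / h) * k ((x - w') / h)) := by
    simp only [hG]
    exact ((hFint _).comp_div hpos.ne').comp_sub_right w
  have hGval : ∫ x : ℝ, k ((x - w) / h) * k ((x - w') / h) = h * kstar ((w - w') * h⁻¹) := by
    simp only [hG]
    rw [integral_sub_right_eq_self
      (fun y : ℝ => (fun u => k u * k ((w - w') * h⁻¹ + u)) (y / h)) w,
      Measure.integral_comp_div (fun u => k u * k ((w - w') * h⁻¹ + u)) h, hkstar, abs_of_pos hpos, smul_eq_mul]
  have hb : ‖∫ x : ℝ, φ x * k ((x - w) / h) * k ((x - w') / h)‖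
      ≤ ∫ x : ℝ, Bφ * (k ((x - w) / h) * k ((x - w') / h)) := by
    refine norm_integral_le_of_norm_le (hGint.const_mul Bφ) (Eventually.of_forall fun x => ?_)
    have h0 : 0 ≤ k ((x - w) / h) * k ((x - w') / h) := mul_nonneg (hk_nonneg _) (hk_nonneg _)
    rw [mul_assoc, norm_mul, Real.norm_eq_abs, Real.norm_eq_abs, abs_of_nonneg h0]
    exact mul_le_mul_of_nonneg_right (hφ_bdd x) h0
  rw [integral_const_mul, hGval] at hb
  rw [norm_mul, Real.norm_eq_abs, abs_of_pos (inv_pos.mpr hpos)]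
  calc _ ≤ h⁻¹ * (Bφ * (h * kstar ((w - w') * h⁻¹))) :=
        mul_le_mul_of_nonneg_left hb (inv_pos.mpr hpos).le
    _ = Bφ * kstar ((w - w') * h⁻¹) := by
        generalize kstar ((w - w') * h⁻¹) = K
        field_simp
end
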